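/- arXiv:2210.10605 — 2 statements merged into one kernel-verified Lean document; each statement's English description precedes it below -/
import Mathlib

section
/- (Convergence of the Lagrangian values along LADMM.) Assume: (i) the function (x, z) ↦ h(z) + f(x) is bounded below on the set {(x, z) : z = Hx}; (ii) h is m-strongly convex with L_h-Lipschitz gradient; (iii) w_k = ∇h(z_k) for every k; (iv) β ≥ L_h, β·m ≥ 2L_h², and L_x ≥ β‖H‖². Then the sequence m_k := L_β(x_k, z_k, w_k) is nonincreasing, bounded below, and hence convergent. -/
open scoped RealInnerProductSpace
open Filter Topology

noncomputable section

/-!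
The value `L (x k) (z k) (w k)` decreases because the three updates balance out.
The `x`-step does not increase `L` since `Lx ≥ β ‖H‖ ^ 2` makes the linearized Lagrangian a
majorant of `L`, up to an additive constant, touching it at `x k`. By strong convexity of `h` and `w (k + 1) = ∇h (z (k + 1))`, the `z`-step decreases
`L` by at least `(m + β) / 2 * ‖Δz‖ ^ 2`. The `w`-step increases `L` by `‖Δw‖ ^ 2 / β`, which is at most
`Lh ^ 2 / β * ‖Δz‖ ^ 2 ≤ m / 2 * ‖Δz‖ ^ 2`.

For the lower bound, the gradient inequality for `h` at `H x`, together with the Lipschitz bound,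
gives `h (H x) ≤ h z + ⟪∇h z, H x - z⟫ + (Lh - m / 2) * ‖H x - z‖ ^ 2`, and `Lh - m / 2 ≤ β / 2`
follows from `β * m ≥ 2 * Lh ^ 2` by the AM-GM inequality. Hence `L (x k) (z k) (w k)` is at least
`h (H (x k)) + f (x k)`.
-/

/-- First-order characterization of strong convexity, obtained by restricting
`h - m / 2 * ‖·‖ ^ 2` to the segment from `a` to `b`. -/
lemma strong_convex_gradient_ineq {E : Type*} [NormedAddCommGroup E] [InnerProductSpace ℝ E]
    [CompleteSpace E] {h : E → ℝ} (hh : Differentiable ℝ h) {m : ℝ}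
    (hconv : ConvexOn ℝ Set.univ (fun z => h z - m / 2 * ‖z‖ ^ 2)) (a b : E) :
    h a + ⟪gradient h a, b - a⟫ + m / 2 * ‖b - a‖ ^ 2 ≤ h b := by
  have hline : HasDerivAt (fun t : ℝ => a + t • (b - a)) (b - a) 0 := by
    simpa using ((hasDerivAt_id (0 : ℝ)).smul_const (b - a)).const_add a
  have hg : HasDerivAt (fun t : ℝ => h (a + t • (b - a))) ⟪gradient h a, b - a⟫ 0 := by
    have h1 : HasFDerivAt h (InnerProductSpace.toDual ℝ E (gradient h a)) (a + (0 : ℝ) • (b - a)) := by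
      simpa using (hh a).hasGradientAt.hasFDerivAt
    exact h1.comp_hasDerivAt (0 : ℝ) hline
  have hq : HasDerivAt (fun t : ℝ => m / 2 * ‖a + t • (b - a)‖ ^ 2)
      (m / 2 * (2 * ⟪a, b - a⟫)) 0 := by
    simpa using hline.norm_sq.const_mul (m / 2)
  have hc : ConvexOn ℝ Set.univ
      (fun t : ℝ => h (a + t • (b - a)) - m / 2 * ‖a + t • (b - a)‖ ^ 2) := by
    have := hconv.comp_affineMap (AffineMap.lineMap a b : ℝ →ᵃ[ℝ] E)
    simpa [Function.comp_def, AffineMap.lineMap_apply, add_comm] using this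
  have key := hc.le_slope_of_hasDerivAt (Set.mem_univ 0) (Set.mem_univ 1) one_pos (hg.sub hq)
  simp only [slope_def_field, one_smul, zero_smul, add_zero, sub_zero, div_one,
    add_sub_cancel] at key
  have e1 : ‖b - a‖ ^ 2 = ‖b‖ ^ 2 - 2 * ⟪a, b⟫ + ‖a‖ ^ 2 := by
    rw [norm_sub_sq_real, real_inner_comm]
  have e2 : ⟪a, b - a⟫ = ⟪a, b⟫ - ‖a‖ ^ 2 := by
    rw [inner_sub_right, real_inner_self_eq_norm_sq]
  rw [e2] at key
  rw [e1]
  linarith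

/-- Convergence of the augmented Lagrangian values along LADMM. -/
theorem ladmm_lagrangian_values_converge
    (n p : ℕ)
    (H : EuclideanSpace ℝ (Fin n) →L[ℝ] EuclideanSpace ℝ (Fin p))
    (f : EuclideanSpace ℝ (Fin n) → ℝ)
    (h : EuclideanSpace ℝ (Fin p) → ℝ) (hh : Differentiable ℝ h)
    (m Lh β Lx : ℝ) (hm : 0 < m) (hLh : 0 < Lh) (hβ : 0 < β) (hLx : 0 < Lx)
    (hbdd : ∃ C : ℝ, ∀ x' : EuclideanSpace ℝ (Fin n), C ≤ h (H x') + f x')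
    (hconv : ConvexOn ℝ Set.univ (fun z => h z - m / 2 * ‖z‖ ^ 2))
    (hlip : ∀ z1 z2 : EuclideanSpace ℝ (Fin p),
      ‖gradient h z1 - gradient h z2‖ ≤ Lh * ‖z1 - z2‖)
    (hβLh : β ≥ Lh) (hβm : β * m ≥ 2 * Lh ^ 2) (hLxβ : Lx ≥ β * ‖H‖ ^ 2)
    (x : ℕ → EuclideanSpace ℝ (Fin n))
    (z w : ℕ → EuclideanSpace ℝ (Fin p))
    (L : EuclideanSpace ℝ (Fin n) → EuclideanSpace ℝ (Fin p) → EuclideanSpace ℝ (Fin p) → ℝ)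
    (hL : ∀ x' z' w', L x' z' w' = h z' + f x' + ⟪w', H x' - z'⟫ + β / 2 * ‖H x' - z'‖ ^ 2)
    (Lt : ℕ → EuclideanSpace ℝ (Fin n) → EuclideanSpace ℝ (Fin p) →
      EuclideanSpace ℝ (Fin p) → ℝ)
    (hLt : ∀ k x' z' w', Lt k x' z' w' = h z' + f x' + ⟪w', H x' - z'⟫
      + Lx / 2 * ‖x' - x k‖ ^ 2
      + β * ⟪x' - x k, (ContinuousLinearMap.adjoint H) (H (x k) - z')⟫)
    (hxmin : ∀ k x', Lt k (x (k + 1)) (z k) (w k) ≤ Lt k x' (z k) (w k))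
    (hzmin : ∀ k z', L (x (k + 1)) (z (k + 1)) (w k) ≤ L (x (k + 1)) z' (w k))
    (hw : ∀ k, w (k + 1) = w k + β • (H (x (k + 1)) - z (k + 1)))
    (hwgrad : ∀ k, w k = gradient h (z k)) :
    Antitone (fun k => L (x k) (z k) (w k)) ∧
    BddBelow (Set.range fun k => L (x k) (z k) (w k)) ∧
    ∃ l : ℝ, Tendsto (fun k => L (x k) (z k) (w k)) atTop (𝓝 l) := by
  have hstep : ∀ k, L (x (k + 1)) (z (k + 1)) (w (k + 1)) ≤ L (x k) (z k) (w k) := by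
    intro k
    have hx : L (x (k + 1)) (z k) (w k) ≤ L (x k) (z k) (w k) := by
      have h1 := hxmin k (x k)
      rw [hLt, hLt, ContinuousLinearMap.adjoint_inner_right] at h1
      rw [hL, hL]
      have h2 : ‖H (x (k + 1) - x k)‖ ^ 2 ≤ ‖H‖ ^ 2 * ‖x (k + 1) - x k‖ ^ 2 := by
        rw [← mul_pow]
        gcongr
        exact H.le_opNorm _
      have h3 : β * ‖H (x (k + 1) - x k)‖ ^ 2 ≤ Lx * ‖x (k + 1) - x k‖ ^ 2 := by
        calc _ ≤ β * (‖H‖ ^ 2 * ‖x (k + 1) - x k‖ ^ 2) := by gcongr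
          _ = (β * ‖H‖ ^ 2) * ‖x (k + 1) - x k‖ ^ 2 := by ring
          _ ≤ _ := by gcongr
      have h4 : H (x (k + 1)) - z k = H (x (k + 1) - x k) + (H (x k) - z k) := by
        rw [map_sub]; abel
      have h5 : ‖H (x (k + 1)) - z k‖ ^ 2 = ‖H (x (k + 1) - x k)‖ ^ 2
          + 2 * ⟪H (x (k + 1) - x k), H (x k) - z k⟫ + ‖H (x k) - z k‖ ^ 2 := by
        rw [h4, norm_add_sq_real]
      rw [h5]
      simp only [sub_self, norm_zero, inner_zero_left] at h1
      linarith
    have hz : L (x (k + 1)) (z (k + 1)) (w (k + 1)) ≤ L (x (k + 1)) (z k) (w k) := by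
      have hsc := strong_convex_gradient_ineq hh hconv (z (k + 1)) (z k)
      rw [← hwgrad] at hsc
      have hΔ : ‖w (k + 1) - w k‖ ≤ Lh * ‖z k - z (k + 1)‖ := by
        rw [hwgrad, hwgrad, norm_sub_rev (z k)]
        exact hlip _ _
      rw [hL, hL]
      obtain ⟨u, hu⟩ : ∃ u, u = H (x (k + 1)) - z (k + 1) := ⟨_, rfl⟩
      obtain ⟨d, hd⟩ : ∃ d, d = z k - z (k + 1) := ⟨_, rfl⟩
      have hud : H (x (k + 1)) - z k = u - d := by rw [hu, hd]; abel
      have hwk := hw k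
      rw [← hu] at hwk
      rw [← hu, hud, hwk]
      rw [← hd, hwk] at hsc
      rw [← hd, hwk, add_sub_cancel_left, norm_smul, Real.norm_of_nonneg hβ.le] at hΔ
      rw [norm_sub_sq_real, inner_sub_right, inner_add_left, real_inner_smul_left,
        real_inner_self_eq_norm_sq]
      rw [inner_add_left, real_inner_smul_left] at hsc
      have hsq : (β * ‖u‖) ^ 2 ≤ (Lh * ‖d‖) ^ 2 := by gcongr
      have hdual : β * ‖u‖ ^ 2 ≤ m / 2 * ‖d‖ ^ 2 := by
        refine le_of_mul_le_mul_left ?_ hβ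
        nlinarith [mul_le_mul_of_nonneg_right hβm (sq_nonneg ‖d‖)]
      nlinarith [mul_nonneg hβ.le (sq_nonneg ‖d‖)]
    exact hz.trans hx
  have hanti : Antitone (fun k => L (x k) (z k) (w k)) := antitone_nat_of_succ_le hstep
  have hbelow : BddBelow (Set.range fun k => L (x k) (z k) (w k)) := by
    obtain ⟨C, hC⟩ := hbdd
    refine ⟨C, ?_⟩
    rintro _ ⟨k, rfl⟩
    refine (hC (x k)).trans ?_
    simp only [hL]
    have hsc := strong_convex_gradient_ineq hh hconv (H (x k)) (z k)
    have hcs : ⟪gradient h (H (x k)) - gradient h (z k), H (x k) - z k⟫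
        ≤ Lh * ‖H (x k) - z k‖ ^ 2 := by
      calc _ ≤ ‖gradient h (H (x k)) - gradient h (z k)‖ * ‖H (x k) - z k‖ :=
            real_inner_le_norm _ _
        _ ≤ (Lh * ‖H (x k) - z k‖) * ‖H (x k) - z k‖ := by gcongr; exact hlip _ _
        _ = _ := by ring
    rw [inner_sub_left, ← hwgrad] at hcs
    rw [← neg_sub (H (x k)) (z k), inner_neg_right, norm_neg] at hsc
    -- AM-GM: `((β + m) / 2) ^ 2 ≥ β * m ≥ 2 * Lh ^ 2`.
    have hconst : Lh ≤ (β + m) / 2 := by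
      refine (sq_le_sq₀ hLh.le (by positivity)).mp ?_
      nlinarith [sq_nonneg (β - m), sq_nonneg Lh]
    nlinarith [mul_le_mul_of_nonneg_right hconst (sq_nonneg ‖H (x k) - z k‖)]
  exact ⟨hanti, hbelow, _, tendsto_atTop_ciInf hanti hbelow⟩
end
end

section
/- (Theorem 1, part c: convergence to a critical point of the objective.) Under the same assumptions as Theorem 1 part a ((i) h + f bounded below on {z = Hx}; (ii) h m-strongly convex with L_h-Lipschitz gradient; (iii) w_k = ∇h(z_k) for all k; (iv) β ≥ L_h, β·m > 2L_h², L_x > β‖H‖²), and assuming in addition that f is differentiable with gradient ∇f, define E(x) = h(Hx) + f(x). Then ∇E(x_k) = Hᵀ∇h(Hx_k) + ∇f(x_k) → 0 as k → ∞. -/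
/-!
The augmented Lagrangian `V k = L_β(x k, z k, w k)` is a Lyapunov function. The `x`-step decreases
it by at least `(Lx - β‖H‖²)/2 · ‖x (k+1) - x k‖²`. Since `w (k+1) = ∇h (z (k+1))`, strong convexity
of `h` makes the `z`-step decrease it by at least `m/2 · ‖z (k+1) - z k‖²`, while the multiplier step
increases it by `‖w (k+1) - w k‖²/β ≤ Lh²/β · ‖z (k+1) - z k‖²`, which `β m > 2 Lh²` absorbs.
Moreover `V k ≥ h (H (x k)) + f (x k)` is bounded below: with `w k = ∇h (z k)` this is an upper
quadratic bound on `h` (`upper_quadratic_bound`). It is obtained without integrating the gradient,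
because `m ≤ Lh` and `β m > 2 Lh²` give `β/2 ≥ Lh`, so the factor `1/2` of the descent lemma can
be spared.

Hence `V` converges and the increments of `x`, `z`, thus also of `w` and the residual
`H (x k) - z k`, tend to zero. The first-order condition of the `x`-step
(`stationarity_of_linearized_min`) expresses `∇E (x (k+1))` as a combination of these quantities.
-/

open scoped RealInnerProductSpace
open Filter Topology

noncomputable section

section Helpers

variable {E : Type*} [NormedAddCommGroup E] [InnerProductSpace ℝ E]

lemma norm_add_smul_sq (a d : E) (t : ℝ) :
    ‖a + t • d‖ ^ 2 = ‖a‖ ^ 2 + t * (2 * ⟪a, d⟫) + t ^ 2 * ‖d‖ ^ 2 := by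
  rw [norm_add_sq_real, inner_smul_right, norm_smul, mul_pow, Real.norm_eq_abs, sq_abs]
  ring

variable [CompleteSpace E]

lemma hasDerivAt_along_line {g : E → ℝ} (hg : Differentiable ℝ g) (a d : E) :
    HasDerivAt (fun t : ℝ => g (a + t • d)) ⟪gradient g a, d⟫ 0 := by
  have h1 : HasDerivAt (fun t : ℝ => a + t • d) d 0 := by
    simpa using ((hasDerivAt_id (0 : ℝ)).smul_const d).const_add a
  have h2 : HasFDerivAt g (fderiv ℝ g a) (a + (0 : ℝ) • d) := by
    simpa using (hg a).hasFDerivAt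
  rw [inner_gradient_left]
  exact h2.comp_hasDerivAt (0 : ℝ) h1

lemma hasDerivAt_quadratic (A B C : ℝ) :
    HasDerivAt (fun t : ℝ => C + t * A + t ^ 2 * B) A 0 := by
  have h1 := (((hasDerivAt_id (0 : ℝ)).mul_const A).const_add C).add
    (((hasDerivAt_id (0 : ℝ)).pow 2).mul_const B)
  refine (h1.congr_deriv (by simp)).congr_of_eventuallyEq (Eventually.of_forall fun t => ?_)
  simp

/-- First-order characterization of strong convexity. -/
lemma strong_convex_lower_bound {h : E → ℝ} (hh : Differentiable ℝ h) {m : ℝ}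
    (hconv : ConvexOn ℝ Set.univ (fun z => h z - m / 2 * ‖z‖ ^ 2)) (a b : E) :
    h a + ⟪gradient h a, b - a⟫ + m / 2 * ‖b - a‖ ^ 2 ≤ h b := by
  set d := b - a with hd
  have hb : b = a + d := by simp [hd]
  have hline : ConvexOn ℝ Set.univ
      (fun t : ℝ => h (a + t • d) - m / 2 * ‖a + t • d‖ ^ 2) := by
    refine ⟨convex_univ, fun s _ t _ μ ν hμ hν hs => ?_⟩
    have key := hconv.2 (Set.mem_univ (a + s • d)) (Set.mem_univ (a + t • d)) hμ hν hs
    have e : μ • (a + s • d) + ν • (a + t • d) = a + (μ • s + ν • t) • d := by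
      have : a = (μ + ν) • a := by rw [hs, one_smul]
      nth_rewrite 3 [this]
      simp only [smul_eq_mul]
      module
    rw [e] at key
    exact key
  have hder : HasDerivAt (fun t : ℝ => h (a + t • d) - m / 2 * ‖a + t • d‖ ^ 2)
      (⟪gradient h a, d⟫ - m / 2 * (2 * ⟪a, d⟫)) 0 := by
    have hq : HasDerivAt (fun t : ℝ => ‖a + t • d‖ ^ 2) (2 * ⟪a, d⟫) 0 := by
      simp_rw [norm_add_smul_sq]
      exact hasDerivAt_quadratic _ _ _
    exact (hasDerivAt_along_line hh a d).sub (hq.const_mul _)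
  have hs := hline.le_slope_of_hasDerivAt (Set.mem_univ 0) (Set.mem_univ 1) zero_lt_one hder
  simp only [slope_def_field, zero_smul, one_smul, add_zero, sub_zero, div_one] at hs
  have hn := norm_add_sq_real a d
  rw [hb]
  rw [hn] at hs
  linarith

/-- If `h` is `m`-strongly convex with `Lh`-Lipschitz gradient and `β m > 2 Lh²`, then `h` lies
below its quadratic models of curvature `β`. The inequality `m ≤ Lh` is used multiplied by
`‖b - a‖²`, since it can fail when `E` is trivial. -/
lemma upper_quadratic_bound {h : E → ℝ} (hh : Differentiable ℝ h) {m Lh β : ℝ} (hm : 0 < m)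
    (hLh : 0 < Lh) (hconv : ConvexOn ℝ Set.univ (fun z => h z - m / 2 * ‖z‖ ^ 2))
    (hlip : ∀ z1 z2 : E, ‖gradient h z1 - gradient h z2‖ ≤ Lh * ‖z1 - z2‖)
    (hβm : β * m > 2 * Lh ^ 2) (a b : E) :
    h b ≤ h a + ⟪gradient h a, b - a⟫ + β / 2 * ‖b - a‖ ^ 2 := by
  have h1 := strong_convex_lower_bound hh hconv b a
  have h2 := strong_convex_lower_bound hh hconv a b
  have hcs : ⟪gradient h b - gradient h a, b - a⟫ ≤ Lh * ‖b - a‖ ^ 2 := by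
    refine (real_inner_le_norm _ _).trans ?_
    have := mul_le_mul_of_nonneg_right (hlip b a) (norm_nonneg (b - a))
    linarith [this, sq (‖b - a‖)]
  rw [inner_sub_left] at hcs
  rw [norm_sub_rev a b, ← neg_sub b a, inner_neg_right] at h1
  have hsq := sq_nonneg ‖b - a‖
  have hmL : m * ‖b - a‖ ^ 2 ≤ Lh * ‖b - a‖ ^ 2 := by linarith
  have hβ' : Lh * ‖b - a‖ ^ 2 ≤ β / 2 * ‖b - a‖ ^ 2 := by
    have e1 := mul_le_mul_of_nonneg_left hmL hLh.le
    have e2 := mul_le_mul_of_nonneg_right hβm.le hsq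
    refine le_of_mul_le_mul_left ?_ hm
    nlinarith
  have := mul_nonneg hm.le hsq
  linarith

/-- First-order condition at a global minimizer of a differentiable function plus a linear and a
proximal term. -/
lemma stationarity_of_linearized_min {f : E → ℝ} (hf : Differentiable ℝ f) (a v c : E) (l : ℝ)
    (hmin : ∀ y, f a + ⟪v, a⟫ + l / 2 * ‖a - c‖ ^ 2 ≤ f y + ⟪v, y⟫ + l / 2 * ‖y - c‖ ^ 2) :
    gradient f a + v + l • (a - c) = 0 := by
  refine ext_inner_right ℝ fun d => ?_
  have hder : HasDerivAt (fun t : ℝ => f (a + t • d) + ⟪v, a + t • d⟫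
      + l / 2 * ‖a + t • d - c‖ ^ 2) (⟪gradient f a, d⟫ + (⟪v, d⟫ + l * ⟪a - c, d⟫)) 0 := by
    have h1 := (hasDerivAt_along_line hf a d).add (hasDerivAt_quadratic
      (⟪v, d⟫ + l * ⟪a - c, d⟫) (l / 2 * ‖d‖ ^ 2) (⟪v, a⟫ + l / 2 * ‖a - c‖ ^ 2))
    refine h1.congr_of_eventuallyEq (Eventually.of_forall fun t => ?_)
    simp only [Pi.add_apply]
    rw [add_sub_right_comm, norm_add_smul_sq, inner_add_right, inner_smul_right]
    ring
  have hloc : IsLocalMin (fun t : ℝ => f (a + t • d) + ⟪v, a + t • d⟫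
      + l / 2 * ‖a + t • d - c‖ ^ 2) 0 :=
    Eventually.of_forall fun t => by simpa using hmin (a + t • d)
  have h0 := hloc.hasDerivAt_eq_zero hder
  rw [inner_add_left, inner_add_left, real_inner_smul_left, inner_zero_left]
  linarith

/-- A sequence that is bounded below and decreases by at least `c * u k ^ 2` at each step forces
`u` to tend to zero. -/
lemma tendsto_zero_of_sufficient_decrease {V u : ℕ → ℝ} {C c : ℝ} (hc : 0 < c)
    (hC : ∀ k, C ≤ V k) (hdec : ∀ k, V (k + 1) + c * u k ^ 2 ≤ V k) :
    Tendsto u atTop (𝓝 0) := by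
  have hanti : Antitone V := antitone_nat_of_succ_le fun k => by
    have := mul_nonneg hc.le (sq_nonneg (u k))
    linarith [hdec k]
  have hlim := tendsto_atTop_ciInf hanti ⟨C, by rintro _ ⟨k, rfl⟩; exact hC k⟩
  have hdiff : Tendsto (fun k => (V k - V (k + 1)) / c) atTop (𝓝 0) := by
    simpa using (hlim.sub (hlim.comp (tendsto_add_atTop_nat 1))).div_const c
  have hsq : Tendsto (fun k => u k ^ 2) atTop (𝓝 0) := by
    refine squeeze_zero (fun k => sq_nonneg _) (fun k => ?_) hdiff
    rw [le_div_iff₀ hc]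
    linarith [hdec k]
  have habs : Tendsto (fun k => |u k|) atTop (𝓝 0) := by
    simpa [Function.comp_def, Real.sqrt_sq_eq_abs] using (Real.continuous_sqrt.tendsto 0).comp hsq
  exact (tendsto_zero_iff_abs_tendsto_zero u).2 habs

end Helpers

/-- Theorem 1, part c: convergence to a critical point of E(x) = h(Hx) + f(x). -/
theorem ladmm_convergence_to_critical_point
    (n p : ℕ)
    (H : EuclideanSpace ℝ (Fin n) →L[ℝ] EuclideanSpace ℝ (Fin p))
    (f : EuclideanSpace ℝ (Fin n) → ℝ)
    (h : EuclideanSpace ℝ (Fin p) → ℝ) (hh : Differentiable ℝ h)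
    (m Lh β Lx : ℝ) (hm : 0 < m) (hLh : 0 < Lh) (hβ : 0 < β) (hLx : 0 < Lx)
    (hbdd : ∃ C : ℝ, ∀ x' : EuclideanSpace ℝ (Fin n), C ≤ h (H x') + f x')
    (hconv : ConvexOn ℝ Set.univ (fun z => h z - m / 2 * ‖z‖ ^ 2))
    (hlip : ∀ z1 z2 : EuclideanSpace ℝ (Fin p),
      ‖gradient h z1 - gradient h z2‖ ≤ Lh * ‖z1 - z2‖)
    (hβLh : β ≥ Lh) (hβm : β * m > 2 * Lh ^ 2) (hLxβ : Lx > β * ‖H‖ ^ 2)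
    (x : ℕ → EuclideanSpace ℝ (Fin n))
    (z w : ℕ → EuclideanSpace ℝ (Fin p))
    (L : EuclideanSpace ℝ (Fin n) → EuclideanSpace ℝ (Fin p) → EuclideanSpace ℝ (Fin p) → ℝ)
    (hL : ∀ x' z' w', L x' z' w' = h z' + f x' + ⟪w', H x' - z'⟫ + β / 2 * ‖H x' - z'‖ ^ 2)
    (Lt : ℕ → EuclideanSpace ℝ (Fin n) → EuclideanSpace ℝ (Fin p) →
      EuclideanSpace ℝ (Fin p) → ℝ)
    (hLt : ∀ k x' z' w', Lt k x' z' w' = h z' + f x' + ⟪w', H x' - z'⟫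
      + Lx / 2 * ‖x' - x k‖ ^ 2
      + β * ⟪x' - x k, (ContinuousLinearMap.adjoint H) (H (x k) - z')⟫)
    (hxmin : ∀ k x', Lt k (x (k + 1)) (z k) (w k) ≤ Lt k x' (z k) (w k))
    (hzmin : ∀ k z', L (x (k + 1)) (z (k + 1)) (w k) ≤ L (x (k + 1)) z' (w k))
    (hw : ∀ k, w (k + 1) = w k + β • (H (x (k + 1)) - z (k + 1)))
    (hwgrad : ∀ k, w k = gradient h (z k))
    (hf : Differentiable ℝ f) :
    Tendsto (fun k => (ContinuousLinearMap.adjoint H) (gradient h (H (x k)))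
      + gradient f (x k)) atTop (𝓝 0) := by
  obtain ⟨C, hC⟩ := hbdd
  have hV : ∀ k, C ≤ L (x k) (z k) (w k) := fun k => by
    rw [hL, hwgrad k]
    linarith [upper_quadratic_bound hh hm hLh hconv hlip hβm (z k) (H (x k)), hC (x k)]
  have hwdiff : ∀ k, ‖w (k + 1) - w k‖ ≤ Lh * ‖z (k + 1) - z k‖ := fun k => by
    rw [hwgrad, hwgrad]
    exact hlip _ _
  have hxstep : ∀ k, L (x (k + 1)) (z k) (w k)
      + (Lx - β * ‖H‖ ^ 2) / 2 * ‖x (k + 1) - x k‖ ^ 2 ≤ L (x k) (z k) (w k) := fun k => by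
    have h1 := hxmin k (x k)
    simp only [hLt, sub_self, norm_zero, map_zero, inner_zero_left,
      ContinuousLinearMap.adjoint_inner_right] at h1
    rw [hL, hL]
    have e : H (x (k + 1)) - z k = (H (x k) - z k) + H (x (k + 1) - x k) := by
      rw [map_sub]; abel
    have hn := norm_add_sq_real (H (x k) - z k) (H (x (k + 1) - x k))
    rw [← e, real_inner_comm] at hn
    have hop : ‖H (x (k + 1) - x k)‖ ^ 2 ≤ ‖H‖ ^ 2 * ‖x (k + 1) - x k‖ ^ 2 := by
      rw [← mul_pow]
      exact pow_le_pow_left₀ (norm_nonneg _) (H.le_opNorm _) 2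
    have hop' := mul_le_mul_of_nonneg_left hop hβ.le
    rw [hn]
    linarith
  have hzwstep : ∀ k, L (x (k + 1)) (z (k + 1)) (w (k + 1))
      + (m / 2 - Lh ^ 2 / β) * ‖z (k + 1) - z k‖ ^ 2 ≤ L (x (k + 1)) (z k) (w k) := fun k => by
    have hsc := strong_convex_lower_bound hh hconv (z (k + 1)) (z k)
    rw [← hwgrad, norm_sub_rev] at hsc
    set r := H (x (k + 1)) - z (k + 1) with hr
    have e : H (x (k + 1)) - z k = r - (z k - z (k + 1)) := by rw [hr]; abel
    have hn := norm_sub_sq_real r (z k - z (k + 1))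
    have hw2 : Lh ^ 2 / β * ‖z (k + 1) - z k‖ ^ 2 ≥ β * ‖r‖ ^ 2 := by
      have h1 := hwdiff k
      rw [hw k, add_sub_cancel_left, norm_smul, Real.norm_of_nonneg hβ.le] at h1
      have h2 := pow_le_pow_left₀ (by positivity) h1 2
      rw [ge_iff_le, div_mul_eq_mul_div, le_div_iff₀ hβ]
      linarith [h2, mul_pow β ‖r‖ 2, mul_pow Lh ‖z (k + 1) - z k‖ 2]
    rw [hL, hL, e, hn, ← hr]
    rw [norm_sub_rev (z k) (z (k + 1))]
    rw [hw k, inner_add_left, real_inner_smul_left] at hsc ⊢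
    rw [real_inner_self_eq_norm_sq, inner_sub_right (w k) r]
    have := mul_nonneg hβ.le (sq_nonneg ‖z (k + 1) - z k‖)
    linarith
  have hcx : 0 < (Lx - β * ‖H‖ ^ 2) / 2 := by linarith
  have hcz : 0 < m / 2 - Lh ^ 2 / β := by
    rw [sub_pos, div_lt_div_iff₀ hβ two_pos]
    linarith
  have hdx : Tendsto (fun k => x (k + 1) - x k) atTop (𝓝 0) := by
    refine tendsto_zero_iff_norm_tendsto_zero.2
      (tendsto_zero_of_sufficient_decrease hcx hV fun k => ?_)
    have := mul_nonneg hcz.le (sq_nonneg ‖z (k + 1) - z k‖)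
    linarith [hxstep k, hzwstep k]
  have hdz : Tendsto (fun k => z (k + 1) - z k) atTop (𝓝 0) := by
    refine tendsto_zero_iff_norm_tendsto_zero.2
      (tendsto_zero_of_sufficient_decrease hcz hV fun k => ?_)
    have := mul_nonneg hcx.le (sq_nonneg ‖x (k + 1) - x k‖)
    linarith [hxstep k, hzwstep k]
  have hdw : Tendsto (fun k => w (k + 1) - w k) atTop (𝓝 0) :=
    squeeze_zero_norm hwdiff (by simpa using hdz.norm.const_mul Lh)
  have hres1 : Tendsto (fun k => H (x (k + 1)) - z (k + 1)) atTop (𝓝 0) := by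
    have h1 : Tendsto (fun k => β⁻¹ • (w (k + 1) - w k)) atTop (𝓝 0) := by
      simpa using hdw.const_smul β⁻¹
    refine h1.congr fun k => ?_
    rw [hw k, add_sub_cancel_left, inv_smul_smul₀ hβ.ne']
  have hres : Tendsto (fun k => H (x k) - z k) atTop (𝓝 0) :=
    (tendsto_add_atTop_iff_nat (f := fun k => H (x k) - z k) 1).1 hres1
  have hgrad : Tendsto (fun k => gradient h (H (x (k + 1))) - gradient h (z k)) atTop (𝓝 0) := by
    refine squeeze_zero_norm (fun k => hlip _ _) ?_
    have h1 : Tendsto (fun k => H (x (k + 1)) - z k) atTop (𝓝 0) := by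
      simpa using hres1.add hdz
    simpa using h1.norm.const_mul Lh
  have hopt : ∀ k, gradient f (x (k + 1))
      + ContinuousLinearMap.adjoint H (w k + β • (H (x k) - z k))
      + Lx • (x (k + 1) - x k) = 0 := fun k => by
    refine stationarity_of_linearized_min hf _ _ _ _ fun y => ?_
    have h1 := hxmin k y
    simp only [hLt, ContinuousLinearMap.adjoint_inner_right, map_sub, inner_sub_right,
      inner_sub_left] at h1
    simp only [ContinuousLinearMap.adjoint_inner_left, inner_add_left, real_inner_smul_left,
      inner_sub_left]
    rw [real_inner_comm (H (x k)) (H y), real_inner_comm (z k) (H y),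
      real_inner_comm (H (x k)) (H (x (k + 1))), real_inner_comm (z k) (H (x (k + 1)))] at h1
    linarith
  refine (tendsto_add_atTop_iff_nat 1).1 ?_
  have hfin : Tendsto (fun k => ContinuousLinearMap.adjoint H
      ((gradient h (H (x (k + 1))) - gradient h (z k)) - β • (H (x k) - z k))
      - Lx • (x (k + 1) - x k)) atTop (𝓝 0) := by
    have h1 := ((ContinuousLinearMap.adjoint H).continuous.tendsto 0).comp
      (by simpa using hgrad.sub (hres.const_smul β) : Tendsto (fun k =>
        (gradient h (H (x (k + 1))) - gradient h (z k)) - β • (H (x k) - z k)) atTop (𝓝 0))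
    simpa using h1.sub (hdx.const_smul Lx)
  refine hfin.congr fun k => ?_
  have h1 := hopt k
  rw [hwgrad k, map_add] at h1
  rw [map_sub, map_sub, ← sub_eq_zero, ← neg_eq_zero, ← h1]
  abel
end
end
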